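/- Suppose an infinite binary information system U = (A, F) satisfies the condition of reduction with parameter m. Then for any f_1, ..., f_n ∈ F and any map ν : {0,1}^n → ℕ constant on... there exists a nondeterministic decision tree solving the problem (ν, f_1, ..., f_n) whose depth is at most m and whose number of nodes is at most (m+1)·N + 1, where N is the number of sign patterns in {0,1}^n realized by (f_1, ..., f_n) on A. -/

import Mathlib

/-- Suppose the information system `U = (A, F)` satisfies the condition of reduction with
parameter `m`. Then for any problem `(ν, f₁, …, fₙ)` over `U` there is a nondeterministic
decision tree solving it whose depth is at most `m` and whose number of nodes is at most
`(m + 1)·N + 1`, where `N` is the number of sign patterns realized by `(f₁, …, fₙ)`.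

The nondeterministic decision tree is represented by the finite set `Γ` of its complete
paths: each complete path is a list of (attribute index, value) pairs together with the
label of its terminal node, and all paths start at a common unlabeled root. The tree
solves the problem nondeterministically: every `a ∈ A` is consistent with some complete
path, and every complete path consistent with `a` ends at a leaf labeled
`ν (f₁(a), …, fₙ(a))`. Its depth is the maximum path length, and its number of nodes is
`1 + Σ_{path} (length + 1)`. -/
theorem stmt_18 {A : Type*} (F : Set (A → Bool)) (m : ℕ)
    (hred : ∀ S : Finset ((A → Bool) × Bool), (∀ q ∈ S, q.1 ∈ F) →
      (∃ a : A, ∀ q ∈ S, q.1 a = q.2) →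
      ∃ T ⊆ S, T.card ≤ m ∧
        {a : A | ∀ q ∈ T, q.1 a = q.2} = {a : A | ∀ q ∈ S, q.1 a = q.2})
    (n : ℕ) (f : Fin n → A → Bool) (hf : ∀ k, f k ∈ F) (ν : (Fin n → Bool) → ℕ) :
    ∃ Γ : Finset (List (Fin n × Bool) × ℕ),
      (∀ a : A, ∃ q ∈ Γ, ∀ e ∈ q.1, f e.1 a = e.2) ∧
      (∀ a : A, ∀ q ∈ Γ, (∀ e ∈ q.1, f e.1 a = e.2) → q.2 = ν (fun i => f i a)) ∧
      (∀ q ∈ Γ, q.1.length ≤ m) ∧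
      1 + ∑ q ∈ Γ, (q.1.length + 1) ≤
        (m + 1) * Set.ncard {δ : Fin n → Bool | ∃ a : A, ∀ k, f k a = δ k} + 1 := by
  classical
  have key : ∀ δ : Fin n → Bool, ∃ l : List (Fin n × Bool), (∃ a : A, ∀ k, f k a = δ k) →
      l.length ≤ m ∧ ∀ a : A, (∀ e ∈ l, f e.1 a = e.2) ↔ ∀ k, f k a = δ k := by
    intro δ
    by_cases h : ∃ a : A, ∀ k, f k a = δ k
    swap
    · exact ⟨[], fun h' => absurd h' h⟩
    obtain ⟨T, hTS, hTm, hT⟩ := hred (Finset.univ.image fun k => (f k, δ k))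
      (by
        intro q hq
        obtain ⟨k, -, rfl⟩ := Finset.mem_image.1 hq
        exact hf k)
      (by
        obtain ⟨a, ha⟩ := h
        refine ⟨a, ?_⟩
        intro q hq
        obtain ⟨k, -, rfl⟩ := Finset.mem_image.1 hq
        exact ha k)
    have hk : ∀ q : T, ∃ k, (f k, δ k) = q.1 := by
      intro q
      obtain ⟨k, -, hk⟩ := Finset.mem_image.1 (hTS q.2)
      exact ⟨k, hk⟩
    choose g hg using hk
    refine ⟨T.attach.toList.map fun q => (g q, δ (g q)), fun _ => ⟨by simpa using hTm, ?_⟩⟩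
    intro a
    have h1 := Set.ext_iff.1 hT a
    simp only [Set.mem_setOf_eq] at h1
    constructor
    · intro h2 k
      refine h1.1 ?_ (f k, δ k) (Finset.mem_image_of_mem _ (Finset.mem_univ k))
      intro q hq
      have h3 := h2 (g ⟨q, hq⟩, δ (g ⟨q, hq⟩))
        (List.mem_map.2 ⟨⟨q, hq⟩, by simp, rfl⟩)
      have h4 := hg ⟨q, hq⟩
      simp only at h3 h4
      rw [← h4]
      exact h3
    · intro h2 e he
      obtain ⟨q, -, rfl⟩ := List.mem_map.1 he
      exact h2 _
  choose L hL using key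
  have hfin : {δ : Fin n → Bool | ∃ a : A, ∀ k, f k a = δ k}.Finite := Set.toFinite _
  have hlen : ∀ q ∈ hfin.toFinset.image (fun δ => (L δ, ν δ)), q.1.length ≤ m := by
    intro q hq
    obtain ⟨δ, hδ, rfl⟩ := Finset.mem_image.1 hq
    exact (hL δ (hfin.mem_toFinset.1 hδ)).1
  refine ⟨hfin.toFinset.image (fun δ => (L δ, ν δ)), ?_, ?_, hlen, ?_⟩
  · intro a
    have ha : ∃ b : A, ∀ k, f k b = (fun i => f i a) k := ⟨a, fun _ => rfl⟩
    exact ⟨_, Finset.mem_image_of_mem _ (hfin.mem_toFinset.2 ha),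
      ((hL _ ha).2 a).2 fun _ => rfl⟩
  · intro a q hq hc
    obtain ⟨δ, hδ, rfl⟩ := Finset.mem_image.1 hq
    have h := ((hL δ (hfin.mem_toFinset.1 hδ)).2 a).1 hc
    have : (fun i => f i a) = δ := funext h
    rw [this]
  · rw [Set.ncard_eq_toFinset_card _ hfin, add_comm]
    apply Nat.add_le_add_right
    refine (Finset.sum_le_card_nsmul _ _ (m + 1) fun q hq => Nat.succ_le_succ (hlen q hq)).trans ?_
    rw [smul_eq_mul, mul_comm]
    exact Nat.mul_le_mul_left _ Finset.card_image_le
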